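/- For every integer n ≥ 2, n²/M(n) ≤ 𝔑(n²), where M(n) is the number of distinct entries of the n × n multiplication table and 𝔑(x) = x^{(log 2 / log log x)(1 + 387/(200 log log x))}. -/

import Mathlib

/-- Multiplication table function M(n): number of distinct products ij with 1 ≤ i,j ≤ n. -/
def multTable (n : ℕ) : ℕ :=
  ((Finset.Icc 1 n ×ˢ Finset.Icc 1 n).image (fun p => p.1 * p.2)).card

/-- Nicolas's bound 𝔑(x) = x^{(log 2 / log log x)(1 + 387/(200 log log x))}. -/
noncomputable def nicolasBound (x : ℝ) : ℝ :=
  x ^ ((Real.log 2 / Real.log (Real.log x)) * (1 + 387 / (200 * Real.log (Real.log x))))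


lemma aux_energy (n : ℕ) : Finset.mulEnergy (Finset.Icc 1 n) (Finset.Icc 1 n) ≤
    (∑ x ∈ Finset.Icc 1 n, n / x) ^ 2 := by
  classical
  set T := (Finset.Icc 1 n).sigma (fun x => Finset.Icc 1 (n / x)) with hT
  have hTc : T.card = ∑ x ∈ Finset.Icc 1 n, n / x := by
    rw [hT, Finset.card_sigma]; simp
  rw [← hTc, sq, ← Finset.card_product, Finset.mulEnergy]
  refine le_trans (Finset.card_le_card ?_) (Finset.card_image_le (s := T ×ˢ T)
    (f := fun p => ((p.1.2 * p.1.1, p.1.2 * p.2.1), (p.2.2 * p.2.1, p.2.2 * p.1.1))))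
  rintro ⟨⟨a, c⟩, ⟨b, d⟩⟩ h
  simp only [Finset.mem_filter, Finset.mem_product, Finset.mem_Icc] at h
  obtain ⟨⟨⟨⟨ha1, ha⟩, hc1, hc⟩, ⟨hb1, hb⟩, hd1, hd⟩, he⟩ := h
  obtain ⟨x, y, hxy, hx, hy⟩ := Nat.exists_coprime a c
  have hg : 0 < Nat.gcd a c := Nat.gcd_pos_of_pos_left _ ha1
  generalize Nat.gcd a c = g at *
  subst hx hy
  have he2 : x * b = y * d := by
    apply Nat.eq_of_mul_eq_mul_left hg
    linarith
  have hyb : y ∣ b := hxy.symm.dvd_of_dvd_mul_left ⟨d, he2⟩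
  obtain ⟨k, rfl⟩ := hyb
  have hypos : 0 < y := Nat.pos_of_mul_pos_right hc1
  have hxpos : 0 < x := Nat.pos_of_mul_pos_right ha1
  have hk : 0 < k := Nat.pos_of_mul_pos_left hb1
  have hdk : d = k * x := by
    apply Nat.eq_of_mul_eq_mul_left hypos
    linarith
  subst hdk
  simp only [Finset.mem_image, Finset.mem_product]
  refine ⟨(⟨x, g⟩, ⟨y, k⟩), ⟨?_, ?_⟩, ?_⟩
  · simp only [hT, Finset.mem_sigma, Finset.mem_Icc]
    refine ⟨⟨hxpos, by nlinarith⟩, hg, ?_⟩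
    rw [Nat.le_div_iff_mul_le hxpos]; linarith
  · simp only [hT, Finset.mem_sigma, Finset.mem_Icc]
    refine ⟨⟨hypos, by nlinarith⟩, hk, ?_⟩
    rw [Nat.le_div_iff_mul_le hypos]; linarith
  · simp [mul_comm]

open scoped Pointwise in
lemma aux_table (n : ℕ) (hn : 2 ≤ n) :
    (n : ℝ) ^ 2 / (multTable n : ℝ) ≤ (1 + Real.log n) ^ 2 := by
  classical
  have h1 := Finset.le_card_mul_mul_mulEnergy (Finset.Icc 1 n) (Finset.Icc 1 n)
  have hM : (Finset.Icc 1 n * Finset.Icc 1 n).card = multTable n := by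
    rfl
  rw [hM, Nat.card_Icc, Nat.add_sub_cancel] at h1
  have h2 := h1.trans (Nat.mul_le_mul_left _ (aux_energy n))
  have hS : ((∑ x ∈ Finset.Icc 1 n, n / x : ℕ) : ℝ) ≤ n * (1 + Real.log n) := by
    have hh := harmonic_le_one_add_log n
    rw [harmonic_eq_sum_Icc] at hh
    push_cast at hh ⊢
    refine le_trans ?_ (mul_le_mul_of_nonneg_left hh (Nat.cast_nonneg n))
    rw [Finset.mul_sum]
    refine Finset.sum_le_sum fun x _ => ?_
    rw [← div_eq_mul_inv]
    exact Nat.cast_div_le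
  have hnpos : (0:ℝ) < n := by positivity
  have h3 : (n:ℝ)^2 * n^2 ≤ multTable n * ((∑ x ∈ Finset.Icc 1 n, n / x : ℕ) : ℝ)^2 := by
    exact_mod_cast h2
  have h4 : (n:ℝ)^2 * n^2 ≤ multTable n * (n * (1 + Real.log n))^2 :=
    h3.trans (by gcongr)
  have hMpos : (0:ℝ) < multTable n := by
    rcases Nat.eq_zero_or_pos (multTable n) with h | h
    · rw [h] at h3
      have : (0:ℝ) < (n:ℝ)^2 * n^2 := by positivity
      simp at h3
      nlinarith
    · exact_mod_cast h
  rw [div_le_iff₀ hMpos]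
  have hn2 : (0:ℝ) < (n:ℝ)^2 := by positivity
  refine le_of_mul_le_mul_right ?_ hn2
  linarith

lemma aux_an (u : ℝ) (hu : 0 < u) : 2 * Real.log (1 + Real.exp u / 2) ≤
    Real.exp u * (Real.log 2 / u * (1 + 387 / (200 * u))) := by
  have hE := Real.sum_le_exp_of_nonneg hu.le 6
  simp [Finset.sum_range_succ, Nat.factorial] at hE
  have hl2 := Real.log_two_gt_d9
  have hA : (1:ℝ) / u + 387/200/u^2 = (1/u * (1 + 387 / (200 * u))) := by field_simp
  have hB : 0.69 * (1.935/u^2 + 2.935/u + 1.967 + 0.822*u + 0.247*u^2 + 0.057*u^3) ≤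
      Real.exp u * (Real.log 2 / u * (1 + 387 / (200 * u))) := by
    have : Real.exp u * (Real.log 2 / u * (1 + 387 / (200 * u))) =
      Real.log 2 * (Real.exp u * (1 / u + 387/200/u^2)) := by field_simp
    rw [this]
    have h5 : 1.935/u^2 + 2.935/u + 1.967 + 0.822*u + 0.247*u^2 + 0.057*u^3 ≤
        Real.exp u * (1 / u + 387/200/u^2) := by
      refine le_trans ?_ (mul_le_mul_of_nonneg_right hE (by positivity))
      rw [← sub_nonneg]
      have : 0 ≤ ((3:ℝ)/4000) + u * (1/2000) + u^2*(1/4000)+ u^3*(1/2000) + u^4/120 := by positivity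
      have e : ∀ v : ℝ, v * u = 1 → 0 ≤ (1 + u + u^2/2 + u^3/6+u^4/24+u^5/120)*(v+387/200*v^2) - (1.935*v^2 + 2.935*v + 1.967 + 0.822*u + 0.247*u^2 + 0.057*u^3) := by
        intro v hv
        have hv0 : 0 < v := by
          by_contra hcon; nlinarith
        have : (1 + u + u^2/2 + u^3/6+u^4/24+u^5/120)*(v+387/200*v^2) - (1.935*v^2 + 2.935*v + 1.967 + 0.822*u + 0.247*u^2 + 0.057*u^3)
          = (1 + 387/400 - 1.967) + (1/2 + 387/1200 - 0.822)*u + (1/6+387/4800-0.247)*u^2 + (1/24 + 387/24000-0.057)*u^3 + u^4/120 := by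
          have hv' : v = 1/u := by field_simp; linarith
          rw [hv']; field_simp; ring
        rw [this]; norm_num; positivity
      have := e (1/u) (by field_simp)
      refine le_of_le_of_eq this ?_
      ring
    refine mul_le_mul (by linarith) h5 (by positivity) (by positivity)
  refine le_trans ?_ hB
  have hrec : u * (1/u) = 1 := by field_simp
  have hlog : Real.log (1 + Real.exp u / 2) = u + Real.log (1/2 + Real.exp (-u)) := by
    rw [← Real.log_exp u, ← Real.log_mul (by positivity) (by positivity), Real.log_exp, mul_add,
      ← Real.exp_add]
    simp; ring_nf
  have hlb : Real.log (1/2 + Real.exp (-u)) ≤ (1/2 + Real.exp (-u)) - 1 :=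
    Real.log_le_sub_one_of_pos (by positivity)
  rw [hlog]
  have hx1 : 1.935/u^2 = 1.935 * (1/u)^2 := by field_simp
  have hx2 : 2.935/u = 2.935 * (1/u) := by field_simp
  rw [hx1, hx2]
  have hv0 : 0 < 1/u := by positivity
  generalize 1/u = v at *
  have hv2 : 0 ≤ v^2 := by positivity
  rcases le_total u 1 with h | h
  · have he : Real.exp (-u) ≤ 1 := by simp [hu.le]
    have hv1 : 1 ≤ v := by nlinarith
    have : 0 ≤ u^2 := by positivity
    have : 0 ≤ u^3 := by positivity
    nlinarith
  · have he : Real.exp (-u) ≤ 0.37 := by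
      have h1 : Real.exp (-u) ≤ Real.exp (-1) := by simpa using h
      have := Real.exp_neg_one_lt_d9
      linarith
    have key : 2*u - 0.26 ≤ 0.69 * (2.935*v + 1.967 + 0.822*u + 0.247*u^2 + 0.057*u^3) := by
      have hv3 : v * (u - 2.7)^2 = u - 5.4 + 7.29 * v := by
        have : v * (u - 2.7)^2 = (u * v) * u - 5.4 * (u * v) + 7.29 * v := by ring
        rw [this, hrec]; ring
      have h6 : 0 ≤ v * (u - 2.7)^2 := by positivity
      have h7 : 0 ≤ (u + 5.4) * (u - 2.7)^2 := by positivity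
      nlinarith [sq_nonneg (u - 2.7)]
    nlinarith

theorem avg_multiplicity_le_nicolasBound (n : ℕ) (hn : 2 ≤ n) :
    (n : ℝ) ^ 2 / (multTable n : ℝ) ≤ nicolasBound ((n : ℝ) ^ 2) := by
  refine (aux_table n hn).trans ?_
  have hn' : (2:ℝ) ≤ n := by exact_mod_cast hn
  have hl : Real.log 2 ≤ Real.log n := Real.log_le_log (by norm_num) hn'
  have hl2 := Real.log_two_gt_d9
  have hL : Real.log ((n:ℝ)^2) = 2 * Real.log n := by rw [Real.log_pow]; norm_num
  have hu : 0 < Real.log (Real.log ((n:ℝ)^2)) := Real.log_pos (by rw [hL]; linarith)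
  have han := aux_an _ hu
  rw [Real.exp_log (by rw [hL]; linarith)] at han
  unfold nicolasBound
  rw [Real.rpow_def_of_pos (by positivity)]
  refine le_trans (le_of_eq ?_) (Real.exp_le_exp.2 han)
  rw [hL, two_mul (Real.log (1 + _)), Real.exp_add, Real.exp_log (by linarith)]
  ring
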